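/- arXiv:1902.01594 — 4 statements merged into one kernel-verified Lean document; each statement's English description precedes it below -/
import Mathlib

section
/- Let f : [0,1] → ℝⁿ be a continuous map with f(1) = 0. Then there exist 0 ≤ a₁ ≤ a₂ ≤ ⋯ ≤ aₙ ≤ 1 such that Σ_{i=1}^{n} (−1)^{i+1} f(aᵢ) = f(0)/2. -/
/-!
A tuple of cuts divides a fine partition of the interval into blocks; give consecutive blocks
alternating signs. The signed sum of the increments of `f` is then twice the alternating sum of
`f` at the cuts, up to boundary terms, so it suffices to find `n` cuts where this odd function of
the sign vector is small and to pass to the limit by compactness.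

The cuts come from a parity argument. Let `sᵢ` be the mod 2 sign of the `i`-th coordinate, and let
each tuple of cuts start a walk in which its cuts move one step to the right, one after the other.
Along such walks the cup product `δs₀ ∪ ⋯ ∪ δsₙ₋₁` is the coboundary of
`δs₀ ∪ ⋯ ∪ δsₙ₋₂ ∪ sₙ₋₁`. Summed over all walks, the interior faces cancel in pairs by exchanging
two consecutive moves, and the two remaining faces telescope to an antipodal pair, for which
oddness of `sₙ₋₁` leaves the sum one dimension lower. So an odd number of walks see the `i`-th
coordinate change sign at the `i`-th move for every `i`; on such a walk every coordinate is small
throughout, since few increments change sign along it.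
-/

namespace AlternatingIVT

open Finset

section CupProduct

variable {A R : Type*} [CommRing R] {d : ℕ}

/-- The cup product `δs₀ ∪ ⋯ ∪ δs_{d-1}` of the coboundaries of the `0`-cochains `sᵢ`, evaluated
on the simplex with vertices `y`. Coefficients are meant to have characteristic two, hence the
plus sign in each coboundary. -/
def coboundaryCup (s : Fin d → A → R) (y : Fin (d + 1) → A) : R :=
  ∏ i, (s i (y i.castSucc) + s i (y i.succ))

/-- The cup product `δs₀ ∪ ⋯ ∪ δs_{d-1} ∪ s_d`, whose coboundary is `δs₀ ∪ ⋯ ∪ δs_d`. -/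
def primitiveCup (s : Fin (d + 1) → A → R) (y : Fin (d + 1) → A) : R :=
  coboundaryCup (Fin.init s) y * s (Fin.last d) (y (Fin.last d))

theorem coboundaryCup_succ (s : Fin (d + 1) → A → R) (y : Fin (d + 2) → A) :
    coboundaryCup s y = (s 0 (y 0) + s 0 (y 1)) * coboundaryCup (Fin.tail s) (Fin.tail y) :=
  Fin.prod_univ_succ _

theorem primitiveCup_succ (s : Fin (d + 2) → A → R) (y : Fin (d + 2) → A) :
    primitiveCup s y = (s 0 (y 0) + s 0 (y 1)) * primitiveCup (Fin.tail s) (Fin.tail y) := by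
  rw [primitiveCup, coboundaryCup_succ, mul_assoc]
  rfl

theorem sum_primitiveCup_removeNth [CharP R 2] (s : Fin (d + 1) → A → R) (y : Fin (d + 2) → A) :
    ∑ k : Fin (d + 2), primitiveCup s (k.removeNth y) = coboundaryCup s y := by
  induction d with
  | zero => simp [primitiveCup, coboundaryCup, Fin.removeNth, add_comm]
  | succ d ih =>
    have face_zero : primitiveCup s (Fin.removeNth 0 y) =
        (s 0 (y 1) + s 0 (y 2)) * primitiveCup (Fin.tail s) (Fin.tail (Fin.tail y)) :=
      primitiveCup_succ _ _
    have face_one : primitiveCup s (Fin.removeNth 1 y) =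
        (s 0 (y 0) + s 0 (y 2)) * primitiveCup (Fin.tail s) (Fin.tail (Fin.tail y)) :=
      primitiveCup_succ _ _
    have face_succ_succ (k : Fin (d + 1)) : primitiveCup s (Fin.removeNth k.succ.succ y) =
        (s 0 (y 0) + s 0 (y 1)) *
          primitiveCup (Fin.tail s) (Fin.removeNth k.succ (Fin.tail y)) := by
      have tail_face : Fin.tail (Fin.removeNth k.succ.succ y) =
          Fin.removeNth k.succ (Fin.tail y) := by
        ext i
        simp only [Fin.tail, Fin.removeNth_apply, Fin.succ_succAbove_succ]
      rw [primitiveCup_succ, tail_face]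
      rfl
    have tail_faces := ih (Fin.tail s) (Fin.tail y)
    rw [Fin.sum_univ_succ, Fin.removeNth_zero] at tail_faces
    rw [Fin.sum_univ_succ, Fin.sum_univ_succ, Fin.succ_zero_eq_one, face_zero, face_one,
      sum_congr rfl fun k _ => face_succ_succ k, ← mul_sum, coboundaryCup_succ, ← tail_faces]
    linear_combination primitiveCup (Fin.tail s) (Fin.tail (Fin.tail y)) *
      CharTwo.add_self_eq_zero (s 0 (y 2))

theorem primitiveCup_eq_add_coboundaryCup [CharP R 2] {s : Fin (d + 1) → A → R}
    {y z : Fin (d + 1) → A} (h : ∀ i t, s i (z t) = s i (y t) + 1) :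
    primitiveCup s z = primitiveCup s y + coboundaryCup (Fin.init s) y := by
  have coboundary_eq : coboundaryCup (Fin.init s) z = coboundaryCup (Fin.init s) y :=
    prod_congr rfl fun i _ => by
      simp only [Fin.init, h]
      linear_combination CharTwo.add_self_eq_zero (1 : R)
  rw [primitiveCup, coboundary_eq, h, mul_add, mul_one, primitiveCup]

end CupProduct

section Walk

variable {A R : Type*} [CommMonoid A] [CommRing R] {d N : ℕ}

/-- The position at time `t` of the walk that starts with cuts at the left ends of the cells `b r`
and, at its `r`-th move, pushes the `r`-th cut to the right end of its cell. A cut at `m`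
contributes the factor `e m`, so that positions do not depend on the order of the cuts. -/
def walk (e : Fin (N + 1) → A) (b : Fin d → Fin N) (t : Fin (d + 1)) : A :=
  ∏ r, if r.castSucc < t then e (b r).succ else e (b r).castSucc

theorem walk_cons_succ (e : Fin (N + 1) → A) (c : Fin N) (b : Fin d → Fin N) (t : Fin (d + 1)) :
    walk e (Fin.cons c b : Fin (d + 1) → Fin N) t.succ = e c.succ * walk e b t := by
  simp only [walk, Fin.prod_univ_succ, Fin.castSucc_zero, Fin.succ_pos, if_true, Fin.cons_zero,
    Fin.cons_succ, Fin.castSucc_succ, Fin.succ_lt_succ_iff]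

theorem walk_snoc_castSucc (e : Fin (N + 1) → A) (c : Fin N) (b : Fin d → Fin N)
    (t : Fin (d + 1)) :
    walk e (Fin.snoc b c : Fin (d + 1) → Fin N) t.castSucc = e c.castSucc * walk e b t := by
  simp [walk, Fin.prod_univ_castSucc, mul_comm, Fin.le_last]

theorem walk_comp_swap (e : Fin (N + 1) → A) (b : Fin (d + 1) → Fin N) (k : Fin d)
    {t : Fin (d + 2)} (ht : t ≠ k.castSucc.succ) :
    walk e (b ∘ Equiv.swap k.castSucc k.succ) t = walk e b t := by
  have castSucc_swap_lt (r : Fin (d + 1)) :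
      (Equiv.swap k.castSucc k.succ r).castSucc < t ↔ r.castSucc < t := by
    rw [Equiv.swap_apply_def]
    split_ifs with hr hr <;> grind
  rw [walk, walk, ← Equiv.prod_comp (Equiv.swap k.castSucc k.succ)]
  simp only [castSucc_swap_lt, Function.comp_apply, Equiv.swap_apply_self]

theorem walk_succ_mul (e : Fin (N + 1) → A) (b : Fin d → Fin N) (t : Fin d) :
    walk e b t.succ * e (b t).castSucc = walk e b t.castSucc * e (b t).succ := by
  have other_factor (r : Fin d) (hr : r ∈ univ.erase t) :
      (if r.castSucc < t.succ then e (b r).succ else e (b r).castSucc) =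
        if r.castSucc < t.castSucc then e (b r).succ else e (b r).castSucc := by
    grind
  rw [walk, walk, ← mul_prod_erase univ _ (mem_univ t), prod_congr rfl other_factor,
    ← mul_prod_erase univ (fun r => ite (r.castSucc < t.castSucc) _ _) (mem_univ t),
    if_pos t.castSucc_lt_succ, if_neg (lt_irrefl _)]
  ac_rfl

theorem walk_succ_succ_of_cuts_eq (e : Fin (N + 1) → A) (he : ∀ m, e m * e m = 1)
    (b : Fin (d + 1) → Fin N) (k : Fin d) (hb : b k.castSucc = b k.succ) :
    walk e b k.succ.succ = walk e b k.castSucc.castSucc := by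
  have first_move := walk_succ_mul e b k.castSucc
  have second_move := walk_succ_mul e b k.succ
  rw [← hb, ← Fin.succ_castSucc] at second_move
  calc walk e b k.succ.succ
      = walk e b k.succ.succ * e (b k.castSucc).castSucc * e (b k.castSucc).castSucc := by
        rw [mul_assoc, he, mul_one]
    _ = walk e b k.castSucc.castSucc * e (b k.castSucc).succ * e (b k.castSucc).succ := by
        rw [second_move, mul_right_comm, first_move]
    _ = walk e b k.castSucc.castSucc := by rw [mul_assoc, he, mul_one]

theorem sum_primitiveCup_removeNth_walk_eq_zero [CharP R 2] (e : Fin (N + 1) → A)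
    (he : ∀ m, e m * e m = 1) (s : Fin (d + 1) → A → R) (k : Fin d) :
    ∑ b : Fin (d + 1) → Fin N, primitiveCup s (k.castSucc.succ.removeNth (walk e b)) = 0 := by
  have face_swap (b : Fin (d + 1) → Fin N) :
      k.castSucc.succ.removeNth (walk e (b ∘ Equiv.swap k.castSucc k.succ)) =
        k.castSucc.succ.removeNth (walk e b) :=
    funext fun i => walk_comp_swap e b k (Fin.succAbove_ne _ i)
  refine sum_involution (fun b _ => b ∘ Equiv.swap k.castSucc k.succ) (fun b _ => ?_)
    (fun b _ face_ne_zero swap_eq => face_ne_zero ?_) (fun _ _ => mem_univ _) (fun b _ => ?_)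
  · rw [face_swap, CharTwo.add_self_eq_zero]
  · have cuts_eq : b k.castSucc = b k.succ := by
      simpa using congrFun swap_eq k.succ
    have factor_eq_zero : s k.castSucc (k.castSucc.succ.removeNth (walk e b) k.castSucc) +
        s k.castSucc (k.castSucc.succ.removeNth (walk e b) k.succ) = 0 := by
      rw [Fin.removeNth_apply, Fin.removeNth_apply,
        Fin.succAbove_of_castSucc_lt _ _ (Fin.castSucc_lt_succ),
        Fin.succAbove_of_le_castSucc _ _ (by rw [Fin.succ_castSucc]),
        walk_succ_succ_of_cuts_eq e he b k cuts_eq, CharTwo.add_self_eq_zero]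
    rw [primitiveCup, coboundaryCup, prod_eq_zero (mem_univ k) factor_eq_zero, zero_mul]
  · ext r
    simp

theorem sum_primitiveCup_removeNth_zero_walk (e : Fin (N + 1) → A) (s : Fin (d + 1) → A → R) :
    ∑ b : Fin (d + 1) → Fin N, primitiveCup s (Fin.removeNth 0 (walk e b)) =
      ∑ c : Fin N, ∑ b : Fin d → Fin N, primitiveCup s (fun t => e c.succ * walk e b t) := by
  rw [← (Fin.consEquiv fun _ => Fin N).sum_comp, Fintype.sum_prod_type]
  refine sum_congr rfl fun c _ => sum_congr rfl fun b _ => congrArg _ ?_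
  exact funext (walk_cons_succ e c b)

theorem sum_primitiveCup_removeNth_last_walk (e : Fin (N + 1) → A) (s : Fin (d + 1) → A → R) :
    ∑ b : Fin (d + 1) → Fin N, primitiveCup s (Fin.removeNth (Fin.last (d + 1)) (walk e b)) =
      ∑ c : Fin N, ∑ b : Fin d → Fin N, primitiveCup s (fun t => e c.castSucc * walk e b t) := by
  rw [← (Fin.snocEquiv fun _ => Fin N).sum_comp, Fintype.sum_prod_type]
  refine sum_congr rfl fun c _ => sum_congr rfl fun b _ => congrArg _ ?_
  rw [Fin.removeNth_last]
  exact funext (walk_snoc_castSucc e c b)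

theorem sum_coboundaryCup_walk_eq_one [CharP R 2] (e : Fin (N + 1) → A) (he : ∀ m, e m * e m = 1)
    (s : Fin d → A → R) (hs : ∀ i x, s i (e 0 * x) = s i (e (Fin.last N) * x) + 1) :
    ∑ b : Fin d → Fin N, coboundaryCup s (walk e b) = 1 := by
  induction d with
  | zero => simp [coboundaryCup]
  | succ d ih =>
    let G (m : Fin (N + 1)) : R :=
      ∑ b : Fin d → Fin N, primitiveCup s (fun t => e m * walk e b t)
    have antipode : G 0 = G (Fin.last N) + 1 := by
      rw [← ih (fun i x => s i.castSucc (e (Fin.last N) * x))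
        fun i x => by rw [mul_left_comm, hs, mul_left_comm], ← sum_add_distrib]
      exact sum_congr rfl fun b _ => primitiveCup_eq_add_coboundaryCup fun i t => hs i _
    have telescope : G 0 + ∑ c : Fin N, G c.succ = ∑ c : Fin N, G c.castSucc + G (Fin.last N) := by
      rw [← Fin.sum_univ_succ, Fin.sum_univ_castSucc]
    simp only [← sum_primitiveCup_removeNth]
    rw [sum_comm, Fin.sum_univ_succ, Fin.sum_univ_castSucc,
      sum_eq_zero fun k _ => sum_primitiveCup_removeNth_walk_eq_zero e he s k, zero_add,
      Fin.succ_last, sum_primitiveCup_removeNth_zero_walk, sum_primitiveCup_removeNth_last_walk]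
    linear_combination telescope - antipode +
      CharTwo.add_self_eq_zero (∑ c : Fin N, G c.castSucc - 1)

theorem exists_walk_forall_ne [CharP R 2] [Nontrivial R] (e : Fin (N + 1) → A)
    (he : ∀ m, e m * e m = 1) (s : Fin d → A → R)
    (hs : ∀ i x, s i (e 0 * x) = s i (e (Fin.last N) * x) + 1) :
    ∃ b : Fin d → Fin N, ∀ i, s i (walk e b i.castSucc) ≠ s i (walk e b i.succ) := by
  obtain ⟨b, -, hb⟩ := exists_ne_zero_of_sum_ne_zero
    ((sum_coboundaryCup_walk_eq_one e he s hs).trans_ne one_ne_zero)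
  refine ⟨b, fun i labels_eq => hb (prod_eq_zero (mem_univ i) ?_)⟩
  rw [labels_eq, CharTwo.add_self_eq_zero]

end Walk

section SignVectors

variable {d N : ℕ}

/-- The sign vector of a single cut at `m`: cells to the left of the cut carry `1`, the others
`-1`. Products of these are the sign vectors of several cuts. -/
def flipFrom (m : Fin (N + 1)) : Fin N → ℤˣ :=
  fun c => if m ≤ c.castSucc then -1 else 1

theorem flipFrom_zero : flipFrom (0 : Fin (N + 1)) = -1 := by
  ext c
  simp [flipFrom]

theorem flipFrom_last : flipFrom (Fin.last N) = 1 := by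
  ext c
  simp [flipFrom, Fin.last_le_iff]

theorem flipFrom_succ_apply {m c : Fin N} (hc : c ≠ m) :
    flipFrom m.succ c = flipFrom m.castSucc c := by
  have : m.succ ≤ c.castSucc ↔ m.castSucc ≤ c.castSucc := by grind
  simp only [flipFrom, this]

theorem walk_flipFrom_apply (b : Fin d → Fin N) (t : Fin (d + 1)) {c : Fin N}
    (hc : c ∉ univ.image b) : walk flipFrom b t c = walk flipFrom b 0 c := by
  simp only [walk, Finset.prod_apply]
  refine prod_congr rfl fun r _ => ?_
  have c_ne : c ≠ b r := fun h => hc (mem_image.2 ⟨r, mem_univ r, h.symm⟩)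
  split_ifs <;> simp only [flipFrom_succ_apply c_ne]

theorem exists_odd_label {X G : Type*} [Neg X] [AddCommGroup G] [LinearOrder G]
    [IsOrderedAddMonoid G] (τ : X → ℤˣ) (hτ : ∀ x, τ (-x) = -τ x) (φ : X → G)
    (hφ : ∀ x, φ (-x) = -φ x) :
    ∃ s : X → ZMod 2, (∀ x, s (-x) = s x + 1) ∧
      ∀ x y, s x ≠ s y → 0 ∈ Set.uIcc (φ x) (φ y) := by
  -- `τ` breaks the tie where `φ` vanishes.
  let s (x : X) : ZMod 2 := if 0 < φ x ∨ φ x = 0 ∧ τ x = 1 then 1 else 0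
  refine ⟨s, fun x => ?_, fun x y hxy => ?_⟩
  · rcases Int.units_eq_one_or (τ x) with hx | hx <;>
      rcases lt_trichotomy (φ x) 0 with h | h | h <;>
      simp [s, hφ, hτ, hx, h, ne_of_gt, ne_of_lt, not_lt_of_gt, CharTwo.add_self_eq_zero]
  · rw [Set.mem_uIcc]
    grind

theorem exists_walk_zero_mem_uIcc [NeZero N] (φ : Fin d → (Fin N → ℤˣ) → ℝ)
    (hφ : ∀ i x, φ i (-x) = -φ i x) :
    ∃ b : Fin d → Fin N, ∀ i,
      0 ∈ Set.uIcc (φ i (walk flipFrom b i.castSucc)) (φ i (walk flipFrom b i.succ)) := by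
  choose s s_neg zero_mem using fun i =>
    exists_odd_label (fun x : Fin N → ℤˣ => x 0) (fun _ => rfl) (φ i) (hφ i)
  obtain ⟨b, hb⟩ := exists_walk_forall_ne flipFrom
    (fun m => funext fun c => Int.units_mul_self _) s
    (fun i x => by rw [flipFrom_zero, flipFrom_last, neg_one_mul, one_mul, s_neg])
  exact ⟨b, fun i => zero_mem i _ _ (hb i)⟩

end SignVectors

section SignedIncrement

variable {n N : ℕ} {E : Type*}

/-- The sum of the increments of `g`, each weighted by its sign in `x`: a discrete Riemann–Stieltjes
integral `∫ x dg`. -/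
def signedIncrement [AddCommGroup E] (g : Fin (N + 1) → E) (x : Fin N → ℤˣ) : E :=
  ∑ c, x c • (g c.succ - g c.castSucc)

theorem signedIncrement_neg [AddCommGroup E] (g : Fin (N + 1) → E) (x : Fin N → ℤˣ) :
    signedIncrement g (-x) = -signedIncrement g x := by
  simp only [signedIncrement, Pi.neg_apply, Units.neg_smul, sum_neg_distrib]

theorem signedIncrement_one [AddCommGroup E] (g : Fin (N + 1) → E) :
    signedIncrement g 1 = g (Fin.last N) - g 0 := by
  have telescope := (Fin.sum_univ_succ g).symm.trans (Fin.sum_univ_castSucc g)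
  simp only [signedIncrement, Pi.one_apply, one_smul, sum_sub_distrib]
  rw [sub_eq_sub_iff_add_eq_add, add_comm, telescope, add_comm]

theorem norm_signedIncrement_sub_le [SeminormedAddCommGroup E] {g : Fin (N + 1) → E} {ω : ℝ}
    (hg : ∀ c : Fin N, ‖g c.succ - g c.castSucc‖ ≤ ω) {x y : Fin N → ℤˣ} {S : Finset (Fin N)}
    (hxy : ∀ c ∉ S, x c = y c) :
    ‖signedIncrement g x - signedIncrement g y‖ ≤ #S * (2 * ω) := by
  rw [signedIncrement, signedIncrement, ← sum_sub_distrib,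
    ← sum_subset (subset_univ S) fun c _ hc => sub_eq_zero.2 (by rw [hxy c hc]), ← nsmul_eq_mul]
  refine (norm_sum_le _ _).trans (sum_le_card_nsmul _ _ _ fun c _ => ?_)
  refine (norm_sub_le _ _).trans ?_
  rw [norm_units_zsmul, norm_units_zsmul]
  linarith [hg c]

theorem exists_norm_signedIncrement_le [NeZero N] {g : Fin (N + 1) → Fin n → ℝ} {ω : ℝ}
    (hg : ∀ c : Fin N, ‖g c.succ - g c.castSucc‖ ≤ ω) :
    ∃ b : Fin n → Fin N,
      ‖signedIncrement g (∏ r, flipFrom (b r).castSucc)‖ ≤ n * (2 * ω) := by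
  have ω_nonneg : 0 ≤ ω := (norm_nonneg _).trans (hg 0)
  obtain ⟨b, hb⟩ := exists_walk_zero_mem_uIcc (fun i x => signedIncrement g x i)
    fun i x => by rw [signedIncrement_neg, Pi.neg_apply]
  have near_start (t : Fin (n + 1)) :
      ‖signedIncrement g (walk flipFrom b t) - signedIncrement g (walk flipFrom b 0)‖ ≤
        n * (2 * ω) := by
    refine (norm_signedIncrement_sub_le hg fun c => walk_flipFrom_apply b t).trans ?_
    gcongr
    simpa using card_image_le (s := univ) (f := b)
  have start : walk flipFrom b 0 = ∏ r, flipFrom (b r).castSucc := by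
    simp only [walk, Fin.not_lt_zero, if_false]
  refine ⟨b, start ▸ (pi_norm_le_iff_of_nonneg (by positivity)).2 fun i => ?_⟩
  have coord_mem (t : Fin (n + 1)) : signedIncrement g (walk flipFrom b t) i ∈
      Metric.closedBall (signedIncrement g (walk flipFrom b 0) i) (n * (2 * ω)) :=
    mem_closedBall_iff_norm.2 ((norm_le_pi_norm _ i).trans (near_start t))
  rw [← dist_zero_left]
  exact (convex_closedBall _ _).ordConnected.uIcc_subset (coord_mem _) (coord_mem _) (hb i)

theorem signedIncrement_flipFrom_mul [AddCommGroup E] (g : Fin (N + 1) → E) (m : Fin (N + 1))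
    {x : Fin N → ℤˣ} (hx : ∀ c, c.castSucc < m → x c = 1) :
    signedIncrement g (flipFrom m * x) = (2 : ℕ) • (g m - g 0) - signedIncrement g x := by
  -- Freezing `g` at `m` keeps exactly the increments to the left of `m`.
  have telescope := signedIncrement_one fun c => g (min c m)
  rw [min_eq_right (Fin.le_last m), min_eq_left (Fin.zero_le m)] at telescope
  rw [← telescope, eq_sub_iff_add_eq, signedIncrement, signedIncrement, signedIncrement,
    ← sum_add_distrib, smul_sum]
  refine sum_congr rfl fun c _ => ?_
  rcases lt_or_ge c.castSucc m with hc | hc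
  · have : c.succ ≤ m := by grind
    simp [flipFrom, hx c hc, hc.not_ge, min_eq_left hc.le, min_eq_left this, two_smul]
  · have : m ≤ c.succ := by grind
    simp [flipFrom, hc, this]

/-- The alternating sum `v 0 - v 1 + v 2 - ⋯`. -/
def alternatingSum [AddCommGroup E] [Module ℝ E] (v : Fin n → E) : E :=
  ∑ i : Fin n, (-1 : ℝ) ^ (i : ℕ) • v i

theorem alternatingSum_succ [AddCommGroup E] [Module ℝ E] (v : Fin (n + 1) → E) :
    alternatingSum v = v 0 - alternatingSum (Fin.tail v) := by
  simp only [alternatingSum, Fin.sum_univ_succ, Fin.val_zero, Fin.val_succ, pow_zero, one_smul,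
    pow_succ', neg_one_mul, neg_smul, sum_neg_distrib, sub_eq_add_neg, Fin.tail]

theorem signedIncrement_prod_flipFrom [AddCommGroup E] [Module ℝ E] (g : Fin (N + 1) → E)
    {a : Fin n → Fin (N + 1)} (ha : Monotone a) :
    signedIncrement g (∏ r, flipFrom (a r)) =
      (2 : ℝ) • alternatingSum (g ∘ a) - (g 0 - (-1 : ℝ) ^ n • g (Fin.last N)) := by
  induction n with
  | zero => simp [signedIncrement_one, alternatingSum]
  | succ n ih =>
    have later_signs (c : Fin N) (hc : c.castSucc < a 0) :
        (∏ r : Fin n, flipFrom (a r.succ)) c = 1 := by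
      rw [Finset.prod_apply]
      exact prod_eq_one fun r _ => if_neg (hc.trans_le (ha (Fin.zero_le _))).not_ge
    rw [Fin.prod_univ_succ, signedIncrement_flipFrom_mul g _ later_signs,
      ih (a := fun r => a r.succ) (ha.comp Fin.strictMono_succ.monotone), alternatingSum_succ,
      pow_succ']
    change _ = (2 : ℝ) • (g (a 0) - alternatingSum (g ∘ fun r => a r.succ)) - _
    module

theorem exists_monotone_norm_alternatingSum_sub_le [NeZero N] {g : Fin (N + 1) → Fin n → ℝ}
    {ω : ℝ} (hg : ∀ c : Fin N, ‖g c.succ - g c.castSucc‖ ≤ ω) :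
    ∃ a : Fin n → Fin (N + 1), Monotone a ∧
      ‖alternatingSum (g ∘ a) - (1 / 2 : ℝ) • (g 0 - (-1 : ℝ) ^ n • g (Fin.last N))‖ ≤ n * ω := by
  obtain ⟨b, hb⟩ := exists_norm_signedIncrement_le hg
  let a (r : Fin n) : Fin (N + 1) := (b (Tuple.sort b r)).castSucc
  have a_mono : Monotone a := fun i j hij => Tuple.monotone_sort b hij
  refine ⟨a, a_mono, ?_⟩
  rw [← Equiv.prod_comp (Tuple.sort b), signedIncrement_prod_flipFrom g a_mono] at hb
  calc ‖alternatingSum (g ∘ a) - (1 / 2 : ℝ) • (g 0 - (-1 : ℝ) ^ n • g (Fin.last N))‖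
      = ‖(1 / 2 : ℝ) •
          ((2 : ℝ) • alternatingSum (g ∘ a) - (g 0 - (-1 : ℝ) ^ n • g (Fin.last N)))‖ := by
        congr 1
        module
    _ ≤ 1 / 2 * (n * (2 * ω)) := by
        rw [norm_smul, Real.norm_of_nonneg one_half_pos.le]
        gcongr
    _ = n * ω := by ring

end SignedIncrement

section Partition

theorem exists_monotone_partition_dist_le {X : Type*} [PseudoMetricSpace X] {f : ℝ → X} {p q : ℝ}
    (hpq : p ≤ q) (hf : ContinuousOn f (Set.Icc p q)) {ω : ℝ} (hω : 0 < ω) :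
    ∃ (N : ℕ) (t : Fin (N + 2) → ℝ), Monotone t ∧ (∀ c, t c ∈ Set.Icc p q) ∧ t 0 = p ∧
      t (Fin.last _) = q ∧ ∀ c : Fin (N + 1), dist (f (t c.succ)) (f (t c.castSucc)) ≤ ω := by
  have f_cont := hf.domRestrict
  obtain ⟨t, t_zero, t_mono, ⟨m, t_eq⟩, t_small⟩ := exists_monotone_Icc_subset_open_cover_Icc hpq
    (c := fun z : X => (Set.Icc p q).domRestrict f ⁻¹' Metric.ball z (ω / 2))
    (fun z => Metric.isOpen_ball.preimage f_cont)
    (fun y _ => Set.mem_iUnion.2 ⟨f y, Metric.mem_ball_self (half_pos hω)⟩)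
  refine ⟨m, fun c => t c, fun _ _ h => t_mono h, fun c => (t c).2, t_zero,
    t_eq _ (Nat.le_succ m), fun c => ?_⟩
  obtain ⟨z, hz⟩ := t_small c
  have le_succ := t_mono (Nat.le_succ c)
  have right_mem := hz (Set.right_mem_Icc.2 le_succ)
  have left_mem := hz (Set.left_mem_Icc.2 le_succ)
  exact ((dist_triangle_right _ _ z).trans_lt (add_lt_add right_mem left_mem)).le.trans_eq
    (add_halves ω)

end Partition

section Compactness

variable {n : ℕ} {p q : ℝ}

/-- The ordered simplex of monotone `n`-tuples of points of `[p, q]`. -/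
def monotoneTuples (n : ℕ) (p q : ℝ) : Set (Fin n → ℝ) :=
  {a | Monotone a ∧ ∀ i, a i ∈ Set.Icc p q}

theorem isCompact_monotoneTuples : IsCompact (monotoneTuples n p q) := by
  have : monotoneTuples n p q = {a | Monotone a} ∩ Set.univ.pi fun _ => Set.Icc p q := by
    ext a
    simp only [monotoneTuples, Set.mem_ofPred_eq, Set.mem_inter_iff, Set.mem_univ_pi]
  rw [this]
  exact (isCompact_univ_pi fun _ => isCompact_Icc).inter_left isClosed_monotone

theorem continuousOn_alternatingSum {E : Type*} [SeminormedAddCommGroup E] [NormedSpace ℝ E]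
    {f : ℝ → E} (hf : ContinuousOn f (Set.Icc p q)) :
    ContinuousOn (fun a => alternatingSum (f ∘ a)) (monotoneTuples n p q) :=
  continuousOn_finsetSum _ fun i _ =>
    (hf.comp (t := Set.Icc p q) (continuous_apply i).continuousOn
      fun _ ha => ha.2 i).const_smul ((-1 : ℝ) ^ (i : ℕ))

theorem half_smul_sub_mem_closure_alternatingSum_image {f : ℝ → Fin n → ℝ} (hpq : p ≤ q)
    (hf : ContinuousOn f (Set.Icc p q)) :
    (1 / 2 : ℝ) • (f p - (-1 : ℝ) ^ n • f q) ∈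
      closure ((fun a => alternatingSum (f ∘ a)) '' monotoneTuples n p q) := by
  refine Metric.mem_closure_iff.2 fun ε hε => ?_
  obtain ⟨N, t, t_mono, t_mem, t_zero, t_last, t_small⟩ :=
    exists_monotone_partition_dist_le hpq hf (ω := ε / (n + 1)) (by positivity)
  obtain ⟨a, a_mono, ha⟩ := exists_monotone_norm_alternatingSum_sub_le (g := f ∘ t)
    fun c => (dist_eq_norm _ _).symm.trans_le (t_small c)
  refine ⟨_, ⟨t ∘ a, ⟨t_mono.comp a_mono, fun i => t_mem _⟩, rfl⟩, ?_⟩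
  rw [dist_comm, dist_eq_norm]
  simp only [Function.comp_apply, t_zero, t_last] at ha
  refine ha.trans_lt ?_
  rw [mul_div_assoc', div_lt_iff₀ (by positivity)]
  linarith

end Compactness

end AlternatingIVT

open AlternatingIVT in
theorem alternating_intermediate_value_general {n : ℕ} {E : Type*} [NormedAddCommGroup E]
    [NormedSpace ℝ E] [FiniteDimensional ℝ E] (hE : Module.finrank ℝ E = n) {f : ℝ → E} {p q : ℝ}
    (hpq : p ≤ q) (hf : ContinuousOn f (Set.Icc p q)) :
    ∃ a : Fin n → ℝ, Monotone a ∧ (∀ i, a i ∈ Set.Icc p q) ∧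
      ∑ i : Fin n, (-1 : ℝ) ^ (i : ℕ) • f (a i) = (1 / 2 : ℝ) • (f p - (-1 : ℝ) ^ n • f q) := by
  let L : E ≃L[ℝ] (Fin n → ℝ) := ContinuousLinearEquiv.ofFinrankEq (by simpa using hE)
  have hLf : ContinuousOn (L ∘ f) (Set.Icc p q) := L.continuous.comp_continuousOn hf
  have image_closed := (isCompact_monotoneTuples (n := n).image_of_continuousOn
    (continuousOn_alternatingSum hLf)).isClosed
  obtain ⟨a, ⟨a_mono, a_mem⟩, ha⟩ :=
    image_closed.closure_eq.subset (half_smul_sub_mem_closure_alternatingSum_image hpq hLf)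
  refine ⟨a, a_mono, a_mem, L.injective ?_⟩
  simpa [alternatingSum] using ha

/-- An analogue of the intermediate value theorem: if `f : [0,1] → ℝⁿ` is continuous
with `f(1) = 0`, then there are `0 ≤ a₁ ≤ ⋯ ≤ aₙ ≤ 1` with
`Σ_{i=1}^{n} (−1)^{i+1} f(aᵢ) = f(0)/2`. -/
theorem alternating_intermediate_value
    (n : ℕ) (f : ℝ → EuclideanSpace ℝ (Fin n))
    (hf : ContinuousOn f (Set.Icc 0 1)) (h1 : f 1 = 0) :
    ∃ a : Fin n → ℝ, Monotone a ∧ (∀ i, a i ∈ Set.Icc (0 : ℝ) 1) ∧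
      ∑ i : Fin n, ((-1 : ℝ) ^ (i : ℕ)) • f (a i) = (1 / 2 : ℝ) • f 0 := by
  simpa only [h1, smul_zero, sub_zero] using
    alternating_intermediate_value_general finrank_euclideanSpace_fin zero_le_one hf
end

section
/- Let ψ : X → Y be a submetry between metric spaces and 0 < ε < π/2. If p ∈ X satisfies the ATB(ε) condition with constants L ∈ ℕ and R > 0, then q := ψ(p) ∈ Y also satisfies the ATB(ε) condition with constants L and R. -/
/-- The Euclidean comparison angle `∠̃ x p y`. -/
noncomputable def compAngle {X : Type*} [MetricSpace X] (p x y : X) : ℝ :=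
  Real.arccos ((dist x p ^ 2 + dist y p ^ 2 - dist x y ^ 2) / (2 * dist x p * dist y p))

/-- The point `p` satisfies the `ATB(ε)` condition with constants `L` and `R`. -/
def ATBPoint {X : Type*} [MetricSpace X] (ε : ℝ) (p : X) (L : ℕ) (R : ℝ) : Prop :=
  ∀ y : Fin L → X, (∀ i, y i ∈ Metric.ball p R ∧ y i ≠ p) →
    ∃ i j, i ≠ j ∧ compAngle p (y i) (y j) < ε

/-- A map between metric spaces is a submetry if the image of every closed ball
centered at `x` of radius `r` is the closed ball centered at `ψ x` of radius `r`. -/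
def IsSubmetry {X Y : Type*} [MetricSpace X] [MetricSpace Y] (ψ : X → Y) : Prop :=
  ∀ (x : X) (r : ℝ), 0 < r → ψ '' Metric.closedBall x r = Metric.closedBall (ψ x) r

/-!
Points near `ψ p` lift through `ψ` to points at the same distance from `p`. As `ψ` does not
increase distances, two lifts are at least as far apart as the original points. So the comparison
triangle at `p` has the same adjacent sides and an opposite side at least as long, hence an angle
at least as large.
-/

section

open Metric

variable {X Y : Type*} [MetricSpace X] [MetricSpace Y]

theorem compAngle_le_compAngle_of_dist_le {p x y : X} {q x' y' : Y}
    (hx : dist x p = dist x' q) (hy : dist y p = dist y' q) (hxy : dist x y ≤ dist x' y') :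
    compAngle p x y ≤ compAngle q x' y' := by
  unfold compAngle
  rw [hx, hy]
  apply Real.arccos_le_arccos
  gcongr

theorem IsSubmetry.lipschitzWith_one {ψ : X → Y} (hψ : IsSubmetry ψ) : LipschitzWith 1 ψ := by
  refine LipschitzWith.mk_one fun a b => ?_
  rcases eq_or_ne a b with rfl | hab
  · simp
  · have hball := hψ b (dist a b) (dist_pos.2 hab)
    exact hball.subset (Set.mem_image_of_mem ψ (mem_closedBall.2 le_rfl))

theorem IsSubmetry.exists_eq_dist_eq {ψ : X → Y} (hψ : IsSubmetry ψ) (p : X) (y : Y) :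
    ∃ x, ψ x = y ∧ dist x p = dist y (ψ p) := by
  rcases eq_or_ne y (ψ p) with rfl | hy
  · exact ⟨p, rfl, by simp only [dist_self]⟩
  · have hball := hψ p (dist y (ψ p)) (dist_pos.2 hy)
    obtain ⟨x, hxp, rfl⟩ := hball.superset (mem_closedBall.2 le_rfl)
    exact ⟨x, rfl, le_antisymm hxp (by simpa using hψ.lipschitzWith_one.dist_le_mul x p)⟩

theorem atb_of_submetry_general {ψ : X → Y} (hψ : LipschitzWith 1 ψ) {ε : ℝ} {p : X} {L : ℕ}
    {R : ℝ} (hlift : ∀ y ∈ ball (ψ p) R, ∃ x, ψ x = y ∧ dist x p = dist y (ψ p))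
    (hATB : ATBPoint ε p L R) : ATBPoint ε (ψ p) L R := by
  intro y hy
  choose x hxy hdist using fun i => hlift (y i) (hy i).1
  have hx : ∀ i, x i ∈ ball p R ∧ x i ≠ p := fun i =>
    ⟨(hdist i).trans_lt (hy i).1, fun hxp => (hy i).2 (by rw [← hxy i, hxp])⟩
  obtain ⟨i, j, hij, hangle⟩ := hATB x hx
  have hle : dist (y i) (y j) ≤ dist (x i) (x j) := by
    simpa [hxy] using hψ.dist_le_mul (x i) (x j)
  exact ⟨i, j, hij,
    (compAngle_le_compAngle_of_dist_le (hdist i).symm (hdist j).symm hle).trans_lt hangle⟩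

end

/-- The `ATB(ε)` condition descends through submetries. -/
theorem atb_of_submetry
    {X Y : Type*} [MetricSpace X] [MetricSpace Y]
    (ψ : X → Y) (hψ : IsSubmetry ψ)
    (ε : ℝ) (hε0 : 0 < ε) (hε : ε < Real.pi / 2)
    (p : X) (L : ℕ) (R : ℝ) (hR : 0 < R)
    (hATB : ATBPoint ε p L R) :
    ATBPoint ε (ψ p) L R :=
  atb_of_submetry_general hψ.lipschitzWith_one (fun y _ => hψ.exists_eq_dist_eq p y) hATB
end

section
/- Let (X,d) be a geodesic metric space, f : X → ℝ a quasi-convex function, λ ∈ ℝ, and γ : [0,∞) → X a continuous curve such that f∘γ is nonincreasing and γ satisfies the integrated λ-evolution variational inequality: for every y ∈ X and all 0 ≤ s ≤ t, (1/2)d(γ(t),y)² − (1/2)d(γ(s),y)² + λ∫ₛᵗ d(γ(r),y)² dr ≤ ∫ₛᵗ (f(y) − f(γ(r))) dr. Then γ is self-contracted. -/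
/-- A map `ξ : [0,1] → X` is a minimizing geodesic from `x` to `y` parametrized
proportionally to arc length. -/
def IsGeodesicFromTo {X : Type*} [MetricSpace X] (ξ : ℝ → X) (x y : X) : Prop :=
  ξ 0 = x ∧ ξ 1 = y ∧
    ∀ s ∈ Set.Icc (0 : ℝ) 1, ∀ t ∈ Set.Icc (0 : ℝ) 1,
      dist (ξ s) (ξ t) = |s - t| * dist x y

/-!
Fix a point `p` and a time `s`, and let `z` be the point at ratio `θ` on a geodesic from `γ s` to
`p` along which `f ≤ f (γ s)`. Combining the EVI at `z` with the convexity of the square gives, for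
`t` slightly larger than `s`,
`dist (γ t) p ^ 2 - dist (γ s) p ^ 2 ≤ (t - s) * (O(θ) + (2 / θ) * (f (γ s) - f (γ t)))`.
The function `f ∘ γ` may jump, but its increments telescope: summed over a partition of mesh `h`
they contribute at most `O(h / θ)`. Letting first `h` and then `θ` tend to `0`, the distance to `p`
is nonincreasing along `γ`. Self-contractedness is the case where `p` is a later point of the curve.
-/

open Set Filter Topology

theorem antitoneOn_of_forall_sub_le {α β : Type*} [AddCommGroup α] [LinearOrder α]
    [IsOrderedAddMonoid α] [Archimedean α] [Preorder β] {φ : α → β} {S : Set α} [S.OrdConnected]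
    {h : α} (hh : 0 < h) (hφ : ∀ s ∈ S, ∀ t ∈ S, s ≤ t → t - s ≤ h → φ t ≤ φ s) :
    AntitoneOn φ S := by
  have of_le_nsmul (n : ℕ) : ∀ s ∈ S, ∀ t ∈ S, s ≤ t → t - s ≤ n • h → φ t ≤ φ s := by
    induction n with
    | zero =>
      intro s hs t ht hst hle
      exact hφ s hs t ht hst (hle.trans (by simpa using hh.le))
    | succ n ih =>
      intro s hs t ht hst hle
      rcases le_total (t - s) h with hshort | hlong
      · exact hφ s hs t ht hst hshort
      · have hsu : s ≤ t - h := le_sub_comm.1 hlong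
        have hut : t - h ≤ t := sub_le_self t hh.le
        have hu : t - h ∈ S := S.Icc_subset hs ht ⟨hsu, hut⟩
        have hsn : t - h - s ≤ n • h := by
          rw [sub_right_comm, sub_le_iff_le_add, ← succ_nsmul]
          exact hle
        exact (hφ _ hu t ht hut (sub_sub_cancel t h).le).trans (ih s hs _ hu hsu hsn)
  intro s hs t ht hst
  obtain ⟨n, hn⟩ := Archimedean.arch (t - s) hh
  exact of_le_nsmul n s hs t ht hst hn

theorem sub_le_mul_sub_of_forall_sub_le {φ G : ℝ → ℝ} {S : Set ℝ} [S.OrdConnected]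
    (hG : AntitoneOn G S) {ε C δ : ℝ} (hC : 0 ≤ C) (hδ : 0 < δ)
    (hφ : ∀ s ∈ S, ∀ t ∈ S, s ≤ t → t - s ≤ δ →
      φ t - φ s ≤ (t - s) * (ε + C * (G s - G t)))
    {s t : ℝ} (hs : s ∈ S) (ht : t ∈ S) (hst : s ≤ t) :
    φ t - φ s ≤ ε * (t - s) := by
  have le_of_mesh : ∀ h ∈ Ioc 0 δ, φ t - φ s ≤ ε * (t - s) + h * (C * (G s - G t)) := by
    intro h hh
    have hanti : AntitoneOn (fun r => φ r - ε * r + h * (C * G r)) S := by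
      refine antitoneOn_of_forall_sub_le hh.1 fun u hu v hv huv hle => ?_
      have hinc := hφ u hu v hv huv (hle.trans hh.2)
      have hjump : (v - u) * (C * (G u - G v)) ≤ h * (C * (G u - G v)) :=
        mul_le_mul_of_nonneg_right hle (mul_nonneg hC (sub_nonneg.2 (hG hu hv huv)))
      linarith
    linarith [hanti hs ht hst]
  have hlim : Tendsto (fun h => ε * (t - s) + h * (C * (G s - G t))) (𝓝[>] 0)
      (𝓝 (ε * (t - s))) := by
    refine (Continuous.tendsto' ?_ 0 _ (by simp)).mono_left nhdsWithin_le_nhds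
    fun_prop
  exact ge_of_tendsto hlim (eventually_of_mem (Ioc_mem_nhdsGT hδ) le_of_mesh)

theorem antitoneOn_of_forall_sub_le_mul_add {φ G : ℝ → ℝ} {S : Set ℝ} [S.OrdConnected]
    (hG : AntitoneOn G S)
    (hφ : ∀ ε > 0, ∃ C ≥ 0, ∃ δ > 0, ∀ s ∈ S, ∀ t ∈ S, s ≤ t → t - s ≤ δ →
      φ t - φ s ≤ (t - s) * (ε + C * (G s - G t))) :
    AntitoneOn φ S := by
  intro s hs t ht hst
  have hle : ∀ ε ∈ Ioi (0 : ℝ), φ t - φ s ≤ ε * (t - s) := fun ε hε =>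
    let ⟨_, hC, _, hδ, hinc⟩ := hφ ε hε
    sub_le_mul_sub_of_forall_sub_le hG hC hδ hinc hs ht hst
  have hlim : Tendsto (fun ε => ε * (t - s)) (𝓝[>] 0) (𝓝 0) := by
    refine (Continuous.tendsto' ?_ 0 0 (by simp)).mono_left nhdsWithin_le_nhds
    fun_prop
  exact sub_nonpos.1 (ge_of_tendsto hlim (eventually_of_mem self_mem_nhdsWithin hle))

theorem mul_dist_sq_sub_dist_sq_le {X : Type*} [PseudoMetricSpace X] {x y z p : X} {θ : ℝ}
    (hθ : θ ∈ Icc 0 1) (hxz : dist x z ≤ θ * dist x p) (hzp : dist z p ≤ (1 - θ) * dist x p) :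
    θ * (dist y p ^ 2 - dist x p ^ 2) ≤ dist y z ^ 2 - dist x z ^ 2 := by
  have htri : dist y p ≤ dist y z + (1 - θ) * dist x p := (dist_triangle y z p).trans (by gcongr)
  have hyp : θ * dist y p ^ 2 ≤ θ * (dist y z + (1 - θ) * dist x p) ^ 2 :=
    mul_le_mul_of_nonneg_left (by gcongr) hθ.1
  have hsq : dist x z ^ 2 ≤ (θ * dist x p) ^ 2 := by gcongr
  have hconv : 0 ≤ (1 - θ) * (dist y z - θ * dist x p) ^ 2 :=
    mul_nonneg (sub_nonneg.2 hθ.2) (sq_nonneg _)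
  linarith

section Geodesic

variable {X : Type*} [MetricSpace X] {ξ : ℝ → X} {x y : X} {θ : ℝ}

theorem IsGeodesicFromTo.dist_left (h : IsGeodesicFromTo ξ x y) (hθ : θ ∈ Icc (0 : ℝ) 1) :
    dist x (ξ θ) = θ * dist x y := by
  simpa [h.1, abs_of_nonneg hθ.1] using h.2.2 0 (by simp) θ hθ

theorem IsGeodesicFromTo.dist_right (h : IsGeodesicFromTo ξ x y) (hθ : θ ∈ Icc (0 : ℝ) 1) :
    dist (ξ θ) y = (1 - θ) * dist x y := by
  simpa [h.2.1, abs_sub_comm θ, abs_of_nonneg (sub_nonneg.2 hθ.2)] using h.2.2 θ hθ 1 (by simp)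

end Geodesic

/-- The integrated `lam`-evolution variational inequality for the curve `γ` and the potential `f`,
between any two times of the parameter set `I`. -/
def SatisfiesEVIOn {X : Type*} [PseudoMetricSpace X] (lam : ℝ) (f : X → ℝ) (γ : ℝ → X)
    (I : Set ℝ) : Prop :=
  ∀ y : X, ∀ s ∈ I, ∀ t ∈ I, s ≤ t →
    (1 / 2) * dist (γ t) y ^ 2 - (1 / 2) * dist (γ s) y ^ 2 +
        lam * ∫ r in s..t, dist (γ r) y ^ 2 ≤
      ∫ r in s..t, (f y - f (γ r))

namespace SatisfiesEVIOn

section PseudoMetric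

variable {X : Type*} [PseudoMetricSpace X] {lam : ℝ} {f : X → ℝ} {γ : ℝ → X}

theorem mono {I J : Set ℝ} (hEVI : SatisfiesEVIOn lam f γ J) (hIJ : I ⊆ J) :
    SatisfiesEVIOn lam f γ I :=
  fun y s hs t ht => hEVI y s (hIJ hs) t (hIJ ht)

theorem dist_sq_sub_dist_sq_le {s t ρ : ℝ} {z : X} (hEVI : SatisfiesEVIOn lam f γ (Icc s t))
    (hst : s ≤ t) (hf : AntitoneOn (f ∘ γ) (Icc s t)) (hz : f z ≤ f (γ s))
    (hρ : ∀ r ∈ Icc s t, dist (γ r) z ≤ ρ) :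
    dist (γ t) z ^ 2 - dist (γ s) z ^ 2 ≤
      2 * (t - s) * (|lam| * ρ ^ 2 + (f (γ s) - f (γ t))) := by
  have hs : s ∈ Icc s t := left_mem_Icc.2 hst
  have ht : t ∈ Icc s t := right_mem_Icc.2 hst
  have hdist : |∫ r in s..t, dist (γ r) z ^ 2| ≤ ρ ^ 2 * (t - s) := by
    rw [← abs_of_nonneg (sub_nonneg.2 hst), ← Real.norm_eq_abs (∫ _ in s..t, _)]
    refine intervalIntegral.norm_integral_le_of_norm_le_const fun r hr => ?_
    rw [uIoc_of_le hst] at hr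
    rw [Real.norm_of_nonneg (sq_nonneg _)]
    exact pow_le_pow_left₀ dist_nonneg (hρ r (Ioc_subset_Icc_self hr)) 2
  have hlam : -(|lam| * (ρ ^ 2 * (t - s))) ≤ lam * ∫ r in s..t, dist (γ r) z ^ 2 := by
    refine neg_le_of_abs_le ?_
    rw [abs_mul]
    gcongr
  have hpotential : ∫ r in s..t, (f z - f (γ r)) ≤ (t - s) * (f (γ s) - f (γ t)) := by
    have hint : IntervalIntegrable (fun r => f (γ r)) MeasureTheory.volume s t :=
      AntitoneOn.intervalIntegrable (by rwa [uIcc_of_le hst])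
    calc ∫ r in s..t, (f z - f (γ r))
        ≤ ∫ _ in s..t, (f (γ s) - f (γ t)) :=
          intervalIntegral.integral_mono_on hst (intervalIntegrable_const.sub hint)
            intervalIntegrable_const fun r hr => sub_le_sub hz (hf hr ht hr.2)
      _ = (t - s) * (f (γ s) - f (γ t)) := by
          rw [intervalIntegral.integral_const, smul_eq_mul]
  linarith [hEVI z s hs t ht hst]

theorem dist_sq_sub_dist_sq_le_of_ratio {s t θ M : ℝ} {p z : X}
    (hEVI : SatisfiesEVIOn lam f γ (Icc s t)) (hst : s ≤ t) (hf : AntitoneOn (f ∘ γ) (Icc s t))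
    (hθ : θ ∈ Ioc 0 1) (hsz : dist (γ s) z ≤ θ * dist (γ s) p)
    (hzp : dist z p ≤ (1 - θ) * dist (γ s) p) (hz : f z ≤ f (γ s))
    (hM : dist (γ s) p ≤ M) (hclose : ∀ r ∈ Icc s t, dist (γ r) (γ s) ≤ θ) :
    dist (γ t) p ^ 2 - dist (γ s) p ^ 2 ≤
      (t - s) * (2 * |lam| * (1 + M) ^ 2 * θ + 2 / θ * (f (γ s) - f (γ t))) := by
  have hθ0 : 0 < θ := hθ.1
  have hρ : ∀ r ∈ Icc s t, dist (γ r) z ≤ θ * (1 + M) := fun r hr =>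
    calc dist (γ r) z
        ≤ dist (γ r) (γ s) + dist (γ s) z := dist_triangle _ _ _
      _ ≤ θ + θ * M := by gcongr; exacts [hclose r hr, hsz.trans (by gcongr)]
      _ = θ * (1 + M) := by ring
  refine le_of_mul_le_mul_left ?_ hθ0
  calc θ * (dist (γ t) p ^ 2 - dist (γ s) p ^ 2)
      ≤ dist (γ t) z ^ 2 - dist (γ s) z ^ 2 :=
        mul_dist_sq_sub_dist_sq_le (Ioc_subset_Icc_self hθ) hsz hzp
    _ ≤ 2 * (t - s) * (|lam| * (θ * (1 + M)) ^ 2 + (f (γ s) - f (γ t))) :=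
        hEVI.dist_sq_sub_dist_sq_le hst hf hz hρ
    _ = θ * ((t - s) * (2 * |lam| * (1 + M) ^ 2 * θ + 2 / θ * (f (γ s) - f (γ t)))) := by
        field_simp

end PseudoMetric

theorem antitoneOn_dist {X : Type*} [MetricSpace X] {lam : ℝ} {f : X → ℝ} {γ : ℝ → X} {a b : ℝ}
    {p : X} (hEVI : SatisfiesEVIOn lam f γ (Icc a b)) (hγ : ContinuousOn γ (Icc a b))
    (hf : AntitoneOn (f ∘ γ) (Icc a b))
    (hp : ∀ s ∈ Icc a b, ∃ ξ : ℝ → X, IsGeodesicFromTo ξ (γ s) p ∧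
      ∀ θ ∈ Ioo (0 : ℝ) 1, f (ξ θ) ≤ f (γ s)) :
    AntitoneOn (fun t => dist (γ t) p) (Icc a b) := by
  obtain ⟨M, hM⟩ : BddAbove ((fun t => dist (γ t) p) '' Icc a b) :=
    isCompact_Icc.bddAbove_image ((continuous_id.dist continuous_const).comp_continuousOn hγ)
  have hunif := Metric.uniformContinuousOn_iff_le.1
    (isCompact_Icc.uniformContinuousOn_of_continuous hγ)
  suffices hsq : AntitoneOn (fun t => dist (γ t) p ^ 2) (Icc a b) from
    fun s hs t ht hst => (sq_le_sq₀ dist_nonneg dist_nonneg).1 (hsq hs ht hst)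
  refine antitoneOn_of_forall_sub_le_mul_add hf fun ε hε => ?_
  obtain ⟨c, hc0, hc⟩ := exists_pos_mul_lt hε (2 * |lam| * (1 + M) ^ 2)
  obtain ⟨θ, hθ0, hθ⟩ := exists_between (lt_min hc0 one_pos)
  obtain ⟨hθc, hθ1⟩ := lt_min_iff.1 hθ
  obtain ⟨δ, hδ, hclose⟩ := hunif θ hθ0
  refine ⟨2 / θ, by positivity, δ, hδ, fun s hs t ht hst hle => ?_⟩
  have hsub : Icc s t ⊆ Icc a b := Icc_subset_Icc hs.1 ht.2
  have hθI : θ ∈ Icc (0 : ℝ) 1 := ⟨hθ0.le, hθ1.le⟩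
  obtain ⟨ξ, hξ, hfξ⟩ := hp s hs
  have hnear : ∀ r ∈ Icc s t, dist (γ r) (γ s) ≤ θ := fun r hr =>
    hclose r (hsub hr) s hs <| by
      rw [Real.dist_eq, abs_of_nonneg (sub_nonneg.2 hr.1)]
      linarith [hr.2]
  refine ((hEVI.mono hsub).dist_sq_sub_dist_sq_le_of_ratio hst (hf.mono hsub) ⟨hθ0, hθ1.le⟩
    (hξ.dist_left hθI).le (hξ.dist_right hθI).le (hfξ θ ⟨hθ0, hθ1⟩)
    (hM (mem_image_of_mem _ hs)) hnear).trans ?_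
  have hθε : 2 * |lam| * (1 + M) ^ 2 * θ ≤ ε := le_trans (by gcongr) hc.le
  exact mul_le_mul_of_nonneg_left (add_le_add_left hθε _) (sub_nonneg.2 hst)

end SatisfiesEVIOn

theorem evi_curve_selfContracted_general {X : Type*} [MetricSpace X] {lam : ℝ} {f : X → ℝ}
    {γ : ℝ → X} {I : Set ℝ} [I.OrdConnected] (hγ : ContinuousOn γ I)
    (hgeo : ∀ s ∈ I, ∀ t ∈ I, s ≤ t → ∃ ξ : ℝ → X, IsGeodesicFromTo ξ (γ s) (γ t) ∧
      ∀ θ ∈ Ioo (0 : ℝ) 1, f (ξ θ) ≤ f (γ s))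
    (hf : AntitoneOn (f ∘ γ) I) (hEVI : SatisfiesEVIOn lam f γ I) {t₁ t₂ t₃ : ℝ}
    (h₁ : t₁ ∈ I) (h₃ : t₃ ∈ I) (h₁₂ : t₁ ≤ t₂) (h₂₃ : t₂ ≤ t₃) :
    dist (γ t₂) (γ t₃) ≤ dist (γ t₁) (γ t₃) := by
  have hsub : Icc t₁ t₃ ⊆ I := I.Icc_subset h₁ h₃
  exact (hEVI.mono hsub).antitoneOn_dist (hγ.mono hsub) (hf.mono hsub)
    (fun s hs => hgeo s (hsub hs) t₃ h₃ hs.2)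
    ⟨le_rfl, h₁₂.trans h₂₃⟩ ⟨h₁₂, h₂₃⟩ h₁₂

/-- In a geodesic metric space, if `f` is quasi-convex and `γ : [0,∞) → X` is a
continuous curve along which `f` is nonincreasing and which satisfies the integrated
`λ`-evolution variational inequality, then `γ` is self-contracted. -/
theorem evi_curve_selfContracted
    {X : Type*} [MetricSpace X]
    (hgeo : ∀ x y : X, ∃ ξ : ℝ → X, IsGeodesicFromTo ξ x y)
    (f : X → ℝ)
    (hqc : ∀ (x y : X) (ξ : ℝ → X), IsGeodesicFromTo ξ x y →
      ∀ t ∈ Set.Ioo (0 : ℝ) 1, f (ξ t) ≤ max (f x) (f y))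
    (lam : ℝ) (γ : ℝ → X)
    (hcont : ContinuousOn γ (Set.Ici 0))
    (hdecr : ∀ s t : ℝ, 0 ≤ s → s ≤ t → f (γ t) ≤ f (γ s))
    (hEVI : ∀ (y : X) (s t : ℝ), 0 ≤ s → s ≤ t →
      (1 / 2) * dist (γ t) y ^ 2 - (1 / 2) * dist (γ s) y ^ 2 +
          lam * ∫ r in s..t, dist (γ r) y ^ 2 ≤
        ∫ r in s..t, (f y - f (γ r))) :
    ∀ t₁ t₂ t₃ : ℝ, 0 ≤ t₁ → t₁ ≤ t₂ → t₂ ≤ t₃ →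
      dist (γ t₂) (γ t₃) ≤ dist (γ t₁) (γ t₃) := by
  intro t₁ t₂ t₃ h₁ h₁₂ h₂₃
  refine evi_curve_selfContracted_general hcont (fun s hs t _ hst => ?_)
    (fun s hs t _ => hdecr s t hs) (fun y s hs t _ => hEVI y s t hs)
    h₁ (h₁.trans (h₁₂.trans h₂₃)) h₁₂ h₂₃
  obtain ⟨ξ, hξ⟩ := hgeo (γ s) (γ t)
  exact ⟨ξ, hξ, fun θ hθ => (hqc _ _ ξ hξ θ hθ).trans_eq (max_eq_left (hdecr s t hs hst))⟩
end

section
/- Let (X,d) be a metric space and suppose there exist 0 < α < 1 and N ∈ ℕ such that X admits no subset of cardinality at least N satisfying the SRA(α) condition. Then X satisfies the doubling condition with a constant L depending only on N and α: there is L = L(N, α) ∈ ℕ such that for every x ∈ X and R > 0, there exist x₁, …, x_L ∈ B_R(x) with B_R(x) ⊆ ⋃_{i=1}^{L} B_{R/2}(xᵢ). -/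
/-- A subset of a metric space satisfies the small rough angle condition `SRA(α)`. -/
def IsSRA {X : Type*} [MetricSpace X] (α : ℝ) (s : Set X) : Prop :=
  ∀ x ∈ s, ∀ y ∈ s, ∀ z ∈ s,
    dist x y ≤ max (dist x z + α * dist z y) (α * dist x z + dist z y)

/-!
Points of a set of diameter at most `Λ * ε` that are pairwise more than `ε` apart have their
distances in `[ε, Λ * ε]`, which is covered by finitely many intervals `[δ, (1 + α) * δ]`. If all
distances within a set lie in one such interval, then the set is `SRA(α)`, because
`(1 + α) * δ ≤ d(x, z) + α * d(z, y)`. Colouring pairs by the interval of their distance, Ramsey's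
theorem therefore finds a large `SRA(α)` subset in every large separated set. So the absence of such
subsets bounds the packing numbers of balls, and packing numbers bound covering numbers.
-/

open Finset Metric
open scoped NNReal

universe u

section Ramsey

variable {ι : Type*} {X : Type u}

lemma pairwise_color_eq_insert [DecidableEq X] {c : X → X → ι} (hc : ∀ x y, c x y = c y x)
    {i : ι} {v : X} {T : Finset X} (hT : (T : Set X).Pairwise (c · · = i))
    (hv : ∀ y ∈ T, c v y = i) :
    ((insert v T : Finset X) : Set X).Pairwise (c · · = i) := by
  rw [coe_insert, Set.pairwise_insert]
  exact ⟨hT, fun y hy _ ↦ ⟨hv y hy, hc y v ▸ hv y hy⟩⟩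

lemma exists_le_card_filter_of_sum_le_card [Fintype ι] [DecidableEq ι] [Nonempty ι]
    (f : X → ι) {M : ι → ℕ} {S : Finset X} (hM : ∑ i, M i ≤ #S) :
    ∃ i, M i ≤ #{y ∈ S | f y = i} := by
  rw [card_eq_sum_card_fiberwise (f := f) (t := univ) fun _ _ ↦ mem_coe.2 (mem_univ _)] at hM
  obtain ⟨i, -, hi⟩ := exists_le_of_sum_le univ_nonempty hM
  exact ⟨i, hi⟩

theorem exists_monochromatic_of_le_card [Finite ι] (n : ι → ℕ) :
    ∃ M : ℕ, ∀ (X : Type u) (c : X → X → ι), (∀ x y, c x y = c y x) →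
      ∀ S : Finset X, M ≤ #S →
        ∃ i, ∃ T ⊆ S, n i ≤ #T ∧ (T : Set X).Pairwise (c · · = i) := by
  classical
  have := Fintype.ofFinite ι
  induction n using WellFoundedLT.induction with
  | ind n ih =>
  by_cases! h_zero : ∃ i, n i = 0
  · obtain ⟨i, hi⟩ := h_zero
    exact ⟨0, fun X c _ S _ ↦ ⟨i, ∅, empty_subset S, by simp [hi], by simp⟩⟩
  have update_lt (i : ι) : Function.update n i (n i - 1) < n :=
    update_lt_self_iff.2 (Nat.sub_one_lt (h_zero i))
  choose M hM using fun i ↦ ih _ (update_lt i)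
  refine ⟨∑ i, M i + 1, fun X c hc S hS ↦ ?_⟩
  obtain ⟨v, hv⟩ : S.Nonempty := card_pos.1 (Nat.succ_pos _ |>.trans_le hS)
  have : Nonempty ι := ⟨c v v⟩
  have card_erase : ∑ i, M i ≤ #(S.erase v) := card_erase_of_mem hv ▸ Nat.le_sub_one_of_lt hS
  obtain ⟨i, hi⟩ := exists_le_card_filter_of_sum_le_card (c v) card_erase
  obtain ⟨j, T, hTS, hT_card, hT⟩ := hM i X c hc _ hi
  have hTv : ∀ y ∈ T, y ∈ S.erase v ∧ c v y = i := fun y hy ↦ mem_filter.1 (hTS hy)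
  have hT_sub : T ⊆ S := fun y hy ↦ mem_of_mem_erase (hTv y hy).1
  obtain rfl | hji := eq_or_ne j i
  · have hvT : v ∉ T := fun h ↦ notMem_erase v S (hTv v h).1
    refine ⟨j, insert v T, insert_subset hv hT_sub, ?_,
      pairwise_color_eq_insert hc hT fun y hy ↦ (hTv y hy).2⟩
    rw [Function.update_self] at hT_card
    rw [card_insert_of_notMem hvT]
    exact Nat.sub_le_iff_le_add.1 hT_card
  · rw [Function.update_of_ne hji] at hT_card
    exact ⟨j, T, hT_sub, hT_card, hT⟩

end Ramsey

lemma exists_forall_mem_Icc_geometric {b : ℝ} (hb : 1 < b) (Λ : ℝ) :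
    ∃ k : ℕ, ∀ ε > 0, ∀ d ∈ Set.Icc ε (Λ * ε), ∃ i : Fin (k + 1),
      d ∈ Set.Icc (ε * b ^ (i : ℕ)) (b * (ε * b ^ (i : ℕ))) := by
  obtain ⟨k, hk⟩ := pow_unbounded_of_one_lt Λ hb
  refine ⟨k, fun ε hε d hd ↦ ?_⟩
  obtain ⟨n, hn_le, hn_lt⟩ := exists_nat_pow_near ((one_le_div hε).2 hd.1) hb
  have hnk : n < k := (pow_lt_pow_iff_right₀ hb).1 <|
    calc b ^ n ≤ d / ε := hn_le
      _ ≤ Λ := (div_le_iff₀ hε).2 hd.2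
      _ < b ^ k := hk
  refine ⟨⟨n, hnk.trans k.lt_succ_self⟩, (le_div_iff₀' hε).1 hn_le, ?_⟩
  calc d ≤ ε * b ^ (n + 1) := ((div_lt_iff₀' hε).1 hn_lt).le
    _ = b * (ε * b ^ n) := by ring

section SRA

variable {X : Type u} [MetricSpace X] {α : ℝ}

lemma isSRA_of_pairwise_dist_mem_Icc (hα : 0 ≤ α) {s : Set X} {δ : ℝ}
    (hs : s.Pairwise fun x y ↦ dist x y ∈ Set.Icc δ ((1 + α) * δ)) : IsSRA α s := by
  intro x hx y hy z hz
  obtain rfl | hxy := eq_or_ne x y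
  · exact le_max_of_le_left (by rw [dist_self]; positivity)
  obtain rfl | hxz := eq_or_ne x z
  · exact le_max_of_le_right (by simp)
  obtain rfl | hzy := eq_or_ne z y
  · exact le_max_of_le_left (by simp)
  refine le_max_of_le_left ?_
  calc dist x y ≤ (1 + α) * δ := (hs hx hy hxy).2
    _ = δ + α * δ := by ring
    _ ≤ dist x z + α * dist z y := by
      gcongr
      exacts [(hs hx hz hxz).1, (hs hz hy hzy).1]

theorem exists_isSRA_subset_of_le_card (N : ℕ) (hα : 0 < α) (Λ : ℝ) :
    ∃ M : ℕ, ∀ (X : Type u) [MetricSpace X] (ε : ℝ), 0 < ε → ∀ S : Finset X,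
      ((S : Set X).Pairwise fun x y ↦ dist x y ∈ Set.Icc ε (Λ * ε)) → M ≤ #S →
        ∃ T ⊆ S, N ≤ #T ∧ IsSRA α (T : Set X) := by
  obtain ⟨k, hk⟩ := exists_forall_mem_Icc_geometric (lt_add_of_pos_right 1 hα) Λ
  obtain ⟨M, hM⟩ := exists_monochromatic_of_le_card.{u} fun _ : Fin (k + 1) ↦ N
  refine ⟨M, fun X _ ε hε S hS hS_card ↦ ?_⟩
  choose! scale h_scale using hk ε hε
  obtain ⟨i, T, hTS, hT_card, hT⟩ :=
    hM X (fun x y ↦ scale (dist x y)) (fun x y ↦ by rw [dist_comm]) S hS_card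
  refine ⟨T, hTS, hT_card, isSRA_of_pairwise_dist_mem_Icc hα.le (δ := ε * (1 + α) ^ (i : ℕ)) ?_⟩
  intro x hx y hy hxy
  exact hT hx hy hxy ▸ h_scale _ (hS (hTS hx) (hTS hy) hxy)

theorem exists_packingNumber_le_of_card_isSRA_lt (N : ℕ) (hα : 0 < α) (Λ : ℝ) :
    ∃ L : ℕ, ∀ (X : Type u) [MetricSpace X] (ε : ℝ≥0) (A : Set X), 0 < ε →
      (∀ x ∈ A, ∀ y ∈ A, dist x y ≤ Λ * ε) →
      (∀ s : Finset X, (s : Set X) ⊆ A → IsSRA α (s : Set X) → #s < N) →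
        packingNumber ε A ≤ L := by
  obtain ⟨M, hM⟩ := exists_isSRA_subset_of_le_card.{u} N hα Λ
  refine ⟨M, fun X _ ε A hε hA hN ↦ iSup₂_le fun C hCA ↦ iSup_le fun hC ↦ ?_⟩
  by_contra! hC_card
  obtain ⟨S, hSC, hS_card⟩ := Set.exists_subset_encard_eq hC_card.le
  lift S to Finset X using Set.finite_of_encard_eq_coe hS_card
  have hS : (S : Set X).Pairwise fun x y ↦ dist x y ∈ Set.Icc (ε : ℝ) (Λ * ε) := by
    refine fun x hx y hy hxy ↦ ⟨?_, hA x (hCA (hSC hx)) y (hCA (hSC hy))⟩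
    have h_lt : ε < edist x y := hC (hSC hx) (hSC hy) hxy
    rw [edist_nndist] at h_lt
    exact_mod_cast h_lt.le
  obtain ⟨T, hTS, hT_card, hT⟩ := hM X ε hε S hS (by simpa using hS_card.ge)
  exact (hN T ((coe_subset.2 hTS).trans (hSC.trans hCA)) hT).not_ge hT_card

end SRA

lemma exists_fin_range_eq_of_encard_le {X : Type*} {C : Set X} (hC : C.Nonempty) {L : ℕ}
    (hL : C.encard ≤ L) : ∃ c : Fin L → X, Set.range c = C := by
  have := hC.to_subtype
  have := (Set.finite_of_encard_le_coe hL).fintype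
  obtain ⟨e⟩ : Nonempty (C ↪ Fin L) := Function.Embedding.nonempty_of_card_le <| by
    rw [Fintype.card_fin, ← Nat.card_eq_fintype_card]
    exact_mod_cast (Set.finite_of_encard_le_coe hL).cast_ncard_eq ▸ hL
  refine ⟨Subtype.val ∘ Function.invFun e, ?_⟩
  rw [(Function.invFun_surjective e.injective).range_comp, Subtype.range_coe]

lemma exists_fin_subset_iUnion_ball_of_coveringNumber_le {X : Type*} [PseudoMetricSpace X]
    {A : Set X} (hA : A.Nonempty) {ε : ℝ≥0} {r : ℝ} (hεr : ε < r) {L : ℕ}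
    (hL : coveringNumber ε A ≤ L) :
    ∃ c : Fin L → X, (∀ i, c i ∈ A) ∧ A ⊆ ⋃ i, ball (c i) r := by
  have h_top : coveringNumber ε A ≠ ⊤ := ne_top_of_le_ne_top (ENat.natCast_ne_top L) hL
  have h_cover := isCover_minimalCover h_top
  obtain ⟨c, hc⟩ := exists_fin_range_eq_of_encard_le (h_cover.nonempty hA)
    ((encard_minimalCover h_top).trans_le hL)
  refine ⟨c, Set.range_subset_iff.1 (hc ▸ minimalCover_subset), ?_⟩
  calc A ⊆ ⋃ y ∈ Set.range c, closedBall y ε := hc ▸ isCover_iff_subset_iUnion_closedBall.1 h_cover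
    _ = ⋃ i, closedBall (c i) ε := Set.biUnion_range
    _ ⊆ ⋃ i, ball (c i) r := Set.iUnion_mono fun i ↦ closedBall_subset_ball hεr

theorem doubling_of_no_large_sra_general (N : ℕ) {α : ℝ} (hα : 0 < α) (Λ : ℝ) :
    ∃ L : ℕ, ∀ (X : Type u) [MetricSpace X] (x : X) (R r : ℝ), 0 < R → 0 < r → R ≤ Λ * r →
      (∀ s : Finset X, (s : Set X) ⊆ ball x R → IsSRA α (s : Set X) → #s < N) →
        ∃ c : Fin L → X, (∀ i, c i ∈ ball x R) ∧ ball x R ⊆ ⋃ i, ball (c i) r := by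
  obtain ⟨L, hL⟩ := exists_packingNumber_le_of_card_isSRA_lt.{u} N hα (4 * Λ)
  refine ⟨L, fun X _ x R r hR hr hRr hN ↦ ?_⟩
  lift r to ℝ≥0 using hr.le
  have hε : 0 < r / 2 := half_pos (NNReal.coe_pos.1 hr)
  have h_diam : ∀ y ∈ ball x R, ∀ z ∈ ball x R, dist y z ≤ 4 * Λ * (r / 2 : ℝ≥0) := by
    intro y hy z hz
    rw [mem_ball] at hy hz
    push_cast
    linarith [dist_triangle_right y z x]
  exact exists_fin_subset_iUnion_ball_of_coveringNumber_le (nonempty_ball.2 hR)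
    (NNReal.coe_lt_coe.2 (half_lt_self (NNReal.coe_pos.1 hr)))
    ((coveringNumber_le_packingNumber _ _).trans (hL X (r / 2) _ hε h_diam hN))

/-- If a metric space admits no `SRA(α)`-subset of cardinality at least `N`, then it
satisfies the doubling condition with a constant `L = L(N, α)` depending only on `N`
and `α`: every open ball `B_R(x)` is covered by `L` balls of radius `R/2` centered at
points of `B_R(x)`. -/
theorem doubling_of_no_large_sra (N : ℕ) (α : ℝ) (hα0 : 0 < α) (hα1 : α < 1) :
    ∃ L : ℕ, ∀ (X : Type) [MetricSpace X],
      (¬ ∃ s : Finset X, N ≤ s.card ∧ IsSRA α (↑s : Set X)) →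
      ∀ (x : X) (R : ℝ), 0 < R →
        ∃ c : Fin L → X, (∀ i, c i ∈ Metric.ball x R) ∧
          Metric.ball x R ⊆ ⋃ i, Metric.ball (c i) (R / 2) := by
  obtain ⟨L, hL⟩ := doubling_of_no_large_sra_general N hα0 2
  exact ⟨L, fun X _ hX x R hR ↦ hL X x R (R / 2) hR (half_pos hR) (by linarith)
    fun s _ hs ↦ not_le.1 fun hN ↦ hX ⟨s, hN, hs⟩⟩
end
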